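/- There exist effectively computable constants c > 0 and N > 0 such that for all integers n > N and all integers l with 0 ≤ l ≤ n/(10·log n), one has |a(n,l) − (l+1)^{l+n−1}/(l+1)!| ≤ ((l+1)^{l+n−1}/(l+1)!)·exp(−n/(l+1) + 6.5·log n + c). -/

import Mathlib

open Finset Real

/-- The constant `C(n,k,i)` from Aluffi–Marcolli–Nascimento. -/
noncomputable def Cnki (n k i : ℕ) : ℝ :=
  ((-1 : ℝ) ^ i * (2 * (k : ℝ) * i + n * i + k + n - 1) + (k : ℝ) - i) / (i * (i + 1))
    - (1 / ((i : ℝ) * (k + 1) ^ i)) * ∑ j ∈ Finset.range (k + n - 1), (j : ℝ) ^ i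

/-- The finite set of `m`-tuples of positive integers summing to `N`. -/
def posTuples (m N : ℕ) : Finset (Fin m → ℕ) :=
  (Fintype.piFinset fun _ => Finset.Icc 1 N).filter fun f => ∑ j, f j = N

/-- `a n l = rk H^{2l}(M̄_{0,n})`, via the Aluffi–Marcolli–Nascimento formula. -/
noncomputable def a (n l : ℕ) : ℝ :=
  ∑ k ∈ Finset.range (l + 1),
    ((k + 1 : ℝ) ^ (k + n - 1) / (Nat.factorial (k + 1) : ℝ)) *
      ∑ m ∈ Finset.range (l - k + 1),
        (1 / (Nat.factorial m : ℝ)) *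
          ∑ f ∈ posTuples m (l - k), ∏ j, Cnki n k (f j)

/-!
Write `T k = (k+1)^(k+n-1)/(k+1)!`. The term `k = l` of `a n l` is exactly `T l`, so the error is
the sum over `k < l`, where crude estimates suffice. With `r = l - k`, the bound
`|C(n,k,i)| ≤ (k+n+1)^(2i)` makes the inner sum at most `(e (k+n+1)^2)^r ≤ n^(3r)`, because
there are at most `r^m` compositions of `r` into `m` parts and `∑ r^m/m! ≤ e^r`. On the other hand
`1 - x ≤ exp (-x)` at `x = r/(l+1)` gives `T k ≤ T l * exp (-(n-1)/(l+1))^r`. So the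
`k`-th term is at most `T l * q^r` with `q = exp (-(n-1)/(l+1)) * n^3`; in the given range of `l`
one has `q ≤ 1`, and the error is at most `T l * l * q`.
-/

/-- The coefficient of `x^r` in `exp (∑_{i ≥ 1} c_i x^i)`, expanded over compositions of `r`:
the inner sum of the Aluffi–Marcolli–Nascimento formula for a general sequence `c`. -/
noncomputable def expCoeff (c : ℕ → ℝ) (r : ℕ) : ℝ :=
  ∑ m ∈ range (r + 1), (1 / (Nat.factorial m : ℝ)) * ∑ f ∈ posTuples m r, ∏ j, c (f j)

/-- The factor `(k+1)^(k+n-1)/(k+1)!` in the `k`-th term of `a n l`, which for `k = l` is the main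
term of `a n l`. The exponent is a natural number subtraction, truncated only for `k = n = 0`. -/
noncomputable def leadingTerm (n k : ℕ) : ℝ :=
  (k + 1 : ℝ) ^ (k + n - 1) / (Nat.factorial (k + 1) : ℝ)

section ExpCoeff

variable {c : ℕ → ℝ} {D : ℝ} {m r : ℕ}

theorem expCoeff_zero (c : ℕ → ℝ) : expCoeff c 0 = 1 := by
  simp [expCoeff, posTuples]

theorem card_posTuples_le (m r : ℕ) : #(posTuples m r) ≤ r ^ m :=
  (card_filter_le _ _).trans (by simp)

theorem abs_prod_le_of_mem_posTuples (hc : ∀ i, 1 ≤ i → |c i| ≤ D ^ i) {f : Fin m → ℕ}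
    (hf : f ∈ posTuples m r) : |∏ j, c (f j)| ≤ D ^ r := by
  obtain ⟨hf_mem, hf_sum⟩ := mem_filter.1 hf
  rw [abs_prod, ← hf_sum, ← prod_pow_eq_pow_sum]
  exact prod_le_prod (fun _ _ => abs_nonneg _)
    fun j _ => hc _ (mem_Icc.1 (Fintype.mem_piFinset.1 hf_mem j)).1

theorem abs_sum_posTuples_prod_le (hc : ∀ i, 1 ≤ i → |c i| ≤ D ^ i) (m r : ℕ) :
    |∑ f ∈ posTuples m r, ∏ j, c (f j)| ≤ (r : ℝ) ^ m * D ^ r := by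
  have hD : 0 ≤ D := by simpa using (abs_nonneg _).trans (hc 1 le_rfl)
  calc |∑ f ∈ posTuples m r, ∏ j, c (f j)|
      ≤ ∑ f ∈ posTuples m r, |∏ j, c (f j)| := abs_sum_le_sum_abs _ _
    _ ≤ #(posTuples m r) • D ^ r :=
        sum_le_card_nsmul _ _ _ fun _ hf => abs_prod_le_of_mem_posTuples hc hf
    _ ≤ (r : ℝ) ^ m * D ^ r := by
        rw [nsmul_eq_mul]
        gcongr
        exact_mod_cast card_posTuples_le m r

theorem abs_expCoeff_le (hc : ∀ i, 1 ≤ i → |c i| ≤ D ^ i) (r : ℕ) :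
    |expCoeff c r| ≤ (exp 1 * D) ^ r := by
  have hD : 0 ≤ D := by simpa using (abs_nonneg _).trans (hc 1 le_rfl)
  calc |expCoeff c r|
      ≤ ∑ m ∈ range (r + 1), (1 / (Nat.factorial m : ℝ)) * ((r : ℝ) ^ m * D ^ r) := by
        refine (abs_sum_le_sum_abs _ _).trans (sum_le_sum fun m _ => ?_)
        rw [abs_mul, abs_of_nonneg (by positivity : (0 : ℝ) ≤ 1 / (Nat.factorial m : ℝ))]
        gcongr
        exact abs_sum_posTuples_prod_le hc m r
    _ = (∑ m ∈ range (r + 1), (r : ℝ) ^ m / (Nat.factorial m : ℝ)) * D ^ r := by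
        rw [sum_mul]
        exact sum_congr rfl fun m _ => by ring
    _ ≤ exp r * D ^ r := by
        gcongr
        exact sum_le_exp_of_nonneg r.cast_nonneg _
    _ = (exp 1 * D) ^ r := by rw [mul_pow, exp_one_pow]

end ExpCoeff

section Cnki

theorem sum_range_pow_le (N i : ℕ) : ∑ j ∈ range N, (j : ℝ) ^ i ≤ (N : ℝ) ^ (i + 1) := by
  calc ∑ j ∈ range N, (j : ℝ) ^ i ≤ #(range N) • (N : ℝ) ^ i :=
        sum_le_card_nsmul _ _ _ fun j hj => by
          have hjN : j ≤ N := (mem_range.1 hj).le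
          gcongr
    _ = (N : ℝ) ^ (i + 1) := by rw [card_range, nsmul_eq_mul, pow_succ']

variable {n i : ℕ}

theorem abs_Cnki_rational_part_le (hn : 1 ≤ n) (k : ℕ) (hi : 1 ≤ i) :
    |((-1 : ℝ) ^ i * (2 * (k : ℝ) * i + n * i + k + n - 1) + (k : ℝ) - i) / (i * (i + 1))|
      ≤ 2 * (k + n) := by
  have hn1 : (1 : ℝ) ≤ n := by exact_mod_cast hn
  have hi1 : (1 : ℝ) ≤ i := by exact_mod_cast hi
  set A : ℝ := 2 * (k : ℝ) * i + n * i + k + n - 1 with hA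
  have hA0 : 0 ≤ A := by
    have : (0 : ℝ) ≤ 2 * (k : ℝ) * i + n * i + k := by positivity
    linarith
  have hnum : |(-1 : ℝ) ^ i * A + k - i| ≤ A + k + i := by
    calc |(-1 : ℝ) ^ i * A + k - i| ≤ |(-1 : ℝ) ^ i * A| + |(k : ℝ)| + |(i : ℝ)| :=
          (abs_sub _ _).trans (by gcongr; exact abs_add_le _ _)
      _ = A + k + i := by
          rw [abs_mul, abs_neg_one_pow, one_mul, abs_of_nonneg hA0, Nat.abs_cast, Nat.abs_cast]
  rw [abs_div, abs_of_pos (by positivity : (0 : ℝ) < i * (i + 1)), div_le_iff₀ (by positivity)]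
  calc |(-1 : ℝ) ^ i * A + k - i| ≤ (2 * k + n) * (i + 1) + (i - 1) :=
        hnum.trans (by rw [hA]; linarith)
    _ ≤ (2 * k + n) * (i * (i + 1)) + n * (i * (i + 1)) := by
        have hden : (i + 1 : ℝ) ≤ i * (i + 1) := le_mul_of_one_le_left (by positivity) hi1
        have hden' : (i * (i + 1) : ℝ) ≤ n * (i * (i + 1)) :=
          le_mul_of_one_le_left (by positivity) hn1
        gcongr
        linarith
    _ = 2 * (k + n) * (i * (i + 1)) := by ring

theorem abs_Cnki_power_sum_part_le (n k : ℕ) (hi : 1 ≤ i) :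
    |(1 / ((i : ℝ) * (k + 1) ^ i)) * ∑ j ∈ range (k + n - 1), (j : ℝ) ^ i|
      ≤ ((k + n : ℝ) ^ 2) ^ i := by
  have hweight : 1 / ((i : ℝ) * (k + 1) ^ i) ≤ 1 := by
    rw [div_le_one (by positivity)]
    exact one_le_mul_of_one_le_of_one_le (by exact_mod_cast hi) (one_le_pow₀ (by simp))
  rw [abs_of_nonneg (by positivity)]
  calc (1 / ((i : ℝ) * (k + 1) ^ i)) * ∑ j ∈ range (k + n - 1), (j : ℝ) ^ i
      ≤ ∑ j ∈ range (k + n - 1), (j : ℝ) ^ i := mul_le_of_le_one_left (by positivity) hweight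
    _ ≤ ((k + n - 1 : ℕ) : ℝ) ^ (i + 1) := sum_range_pow_le _ _
    _ ≤ ((k + n : ℕ) : ℝ) ^ (i + 1) := by gcongr; omega
    _ ≤ ((k + n : ℕ) : ℝ) ^ i * ((k + n : ℕ) : ℝ) ^ i := by
        rw [pow_succ]
        gcongr
        exact_mod_cast Nat.le_self_pow (by omega) (k + n)
    _ = ((k + n : ℝ) ^ 2) ^ i := by rw [← mul_pow, ← sq, Nat.cast_add]

theorem abs_Cnki_le (hn : 1 ≤ n) (k : ℕ) (hi : 1 ≤ i) :
    |Cnki n k i| ≤ ((k + n + 1 : ℝ) ^ 2) ^ i := by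
  have hn1 : (1 : ℝ) ≤ n := by exact_mod_cast hn
  have hi0 : i ≠ 0 := by omega
  calc |Cnki n k i| ≤ 2 * (k + n) + ((k + n : ℝ) ^ 2) ^ i :=
        (abs_sub _ _).trans
          (add_le_add (abs_Cnki_rational_part_le hn k hi) (abs_Cnki_power_sum_part_le n k hi))
    _ ≤ (2 * (k + n) : ℝ) ^ i + ((k + n : ℝ) ^ 2) ^ i := by
        gcongr
        exact le_self_pow₀ (by linarith [k.cast_nonneg (α := ℝ)]) hi0
    _ ≤ (2 * (k + n) + (k + n : ℝ) ^ 2) ^ i := pow_add_pow_le (by positivity) (by positivity) hi0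
    _ ≤ ((k + n + 1 : ℝ) ^ 2) ^ i := by
        gcongr
        linarith

theorem abs_expCoeff_Cnki_le {k : ℕ} (hn : 12 ≤ n) (hk : k < n) (r : ℕ) :
    |expCoeff (Cnki n k) r| ≤ ((n : ℝ) ^ 3) ^ r := by
  have hn12 : (12 : ℝ) ≤ n := by exact_mod_cast hn
  have hkn : (k + n + 1 : ℝ) ≤ 2 * n := by
    have : (k + 1 : ℝ) ≤ n := by exact_mod_cast hk
    linarith
  have hbase : exp 1 * (k + n + 1 : ℝ) ^ 2 ≤ (n : ℝ) ^ 3 := by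
    calc exp 1 * (k + n + 1 : ℝ) ^ 2 ≤ 3 * (2 * n : ℝ) ^ 2 := by
          gcongr
          exact exp_one_lt_three.le
      _ = 12 * (n : ℝ) ^ 2 := by ring
      _ ≤ n * (n : ℝ) ^ 2 := by gcongr
      _ = (n : ℝ) ^ 3 := by ring
  exact (abs_expCoeff_le (fun i hi => abs_Cnki_le (by omega) k hi) r).trans (by gcongr)

end Cnki

section LeadingTerm

theorem leadingTerm_nonneg (n k : ℕ) : 0 ≤ leadingTerm n k := by
  unfold leadingTerm
  positivity

theorem leadingTerm_eq_mul_pow {n : ℕ} (hn : 1 ≤ n) (k : ℕ) :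
    leadingTerm n k = leadingTerm 1 k * (k + 1 : ℝ) ^ (n - 1) := by
  rw [leadingTerm, leadingTerm, Nat.add_sub_assoc hn, pow_add, Nat.add_sub_cancel,
    div_mul_eq_mul_div]

theorem leadingTerm_one_monotone : Monotone (leadingTerm 1) := by
  refine monotone_nat_of_le_succ fun k => ?_
  have hsucc : leadingTerm 1 (k + 1) = (k + 2 : ℝ) ^ k / (Nat.factorial (k + 1) : ℝ) := by
    rw [leadingTerm, Nat.factorial_succ (k + 1)]
    push_cast
    field_simp
    ring
  rw [hsucc, leadingTerm, Nat.add_sub_cancel]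
  gcongr
  norm_num

theorem le_mul_exp_neg_sub_div (x : ℝ) {y : ℝ} (hy : 0 < y) : x ≤ y * exp (-((y - x) / y)) := by
  calc x = y * (1 - (y - x) / y) := by field_simp; ring
    _ ≤ y * exp (-((y - x) / y)) := by gcongr; exact one_sub_le_exp_neg _

theorem leadingTerm_le {n k l : ℕ} (hn : 1 ≤ n) (hkl : k ≤ l) :
    leadingTerm n k ≤ leadingTerm n l * exp (-((n - 1 : ℝ) / (l + 1))) ^ (l - k) := by
  have hratio : (k + 1 : ℝ) ≤ (l + 1) * exp (-((l - k : ℝ) / (l + 1))) := by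
    simpa using le_mul_exp_neg_sub_div (k + 1 : ℝ) (by positivity : (0 : ℝ) < l + 1)
  have hswap : exp (-((l - k : ℝ) / (l + 1))) ^ (n - 1)
      = exp (-((n - 1 : ℝ) / (l + 1))) ^ (l - k) := by
    rw [← exp_nat_mul, ← exp_nat_mul, Nat.cast_sub hn, Nat.cast_sub hkl]
    congr 1
    push_cast
    ring
  calc leadingTerm n k = leadingTerm 1 k * (k + 1 : ℝ) ^ (n - 1) := leadingTerm_eq_mul_pow hn k
    _ ≤ leadingTerm 1 l * ((l + 1) * exp (-((l - k : ℝ) / (l + 1)))) ^ (n - 1) := by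
        gcongr
        · exact leadingTerm_nonneg 1 l
        · exact leadingTerm_one_monotone hkl
    _ = leadingTerm n l * exp (-((n - 1 : ℝ) / (l + 1))) ^ (l - k) := by
        rw [mul_pow, hswap, leadingTerm_eq_mul_pow hn l, mul_assoc]

end LeadingTerm

section ErrorBound

variable {n l : ℕ}

theorem a_sub_leadingTerm (n l : ℕ) :
    a n l - leadingTerm n l = ∑ k ∈ range l, leadingTerm n k * expCoeff (Cnki n k) (l - k) := by
  have ha : a n l = ∑ k ∈ range (l + 1), leadingTerm n k * expCoeff (Cnki n k) (l - k) := rfl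
  rw [ha, sum_range_succ, Nat.sub_self, expCoeff_zero, mul_one, add_sub_cancel_right]

theorem abs_leadingTerm_mul_expCoeff_le {k : ℕ} (hn : 12 ≤ n) (hkl : k < l) (hln : l ≤ n) :
    |leadingTerm n k * expCoeff (Cnki n k) (l - k)|
      ≤ leadingTerm n l * (exp (-((n - 1 : ℝ) / (l + 1))) * (n : ℝ) ^ 3) ^ (l - k) := by
  rw [abs_mul, abs_of_nonneg (leadingTerm_nonneg n k), mul_pow, ← mul_assoc]
  exact mul_le_mul (leadingTerm_le (by omega) hkl.le)
    (abs_expCoeff_Cnki_le hn (hkl.trans_le hln) _) (abs_nonneg _)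
    (mul_nonneg (leadingTerm_nonneg n l) (by positivity))

theorem abs_a_sub_leadingTerm_le (hn : 12 ≤ n) (hln : l ≤ n)
    (hq : exp (-((n - 1 : ℝ) / (l + 1))) * (n : ℝ) ^ 3 ≤ 1) :
    |a n l - leadingTerm n l|
      ≤ leadingTerm n l * (l * (exp (-((n - 1 : ℝ) / (l + 1))) * (n : ℝ) ^ 3)) := by
  set q : ℝ := exp (-((n - 1 : ℝ) / (l + 1))) * (n : ℝ) ^ 3
  have hterm : ∀ k ∈ range l,
      |leadingTerm n k * expCoeff (Cnki n k) (l - k)| ≤ leadingTerm n l * q := by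
    intro k hk
    have hkl : k < l := mem_range.1 hk
    refine (abs_leadingTerm_mul_expCoeff_le hn hkl hln).trans ?_
    exact mul_le_mul_of_nonneg_left (pow_le_of_le_one (by positivity) hq (by omega))
      (leadingTerm_nonneg n l)
  calc |a n l - leadingTerm n l|
      ≤ ∑ k ∈ range l, |leadingTerm n k * expCoeff (Cnki n k) (l - k)| := by
        rw [a_sub_leadingTerm]
        exact abs_sum_le_sum_abs _ _
    _ ≤ #(range l) • (leadingTerm n l * q) := sum_le_card_nsmul _ _ _ hterm
    _ = leadingTerm n l * (l * q) := by rw [card_range, nsmul_eq_mul]; ring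

theorem twelve_mul_log_add_four_le {x : ℝ} (hx : 64 ≤ x) : 12 * log x + 4 ≤ x := by
  have htangent : log (x / 2 ^ 5) ≤ x / 2 ^ 5 - 1 := log_le_sub_one_of_pos (by positivity)
  rw [log_div (by positivity) (by positivity), log_pow] at htangent
  push_cast at htangent
  linarith [log_two_lt_d9]

theorem exp_add_natCast_mul_log {y : ℝ} (hy : 0 < y) (x : ℝ) (m : ℕ) :
    exp (x + m * log y) = exp x * y ^ m := by
  rw [exp_add, exp_nat_mul, exp_log hy]

theorem exp_neg_mul_cube_le_one (hn : 64 ≤ n) (hl : (l : ℝ) ≤ n / (4 * log n)) :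
    exp (-((n - 1 : ℝ) / (l + 1))) * (n : ℝ) ^ 3 ≤ 1 := by
  have hn64 : (64 : ℝ) ≤ n := by exact_mod_cast hn
  have hlog : 12 * log n + 4 ≤ n := twelve_mul_log_add_four_le hn64
  have hmul : l * (4 * log n) ≤ n := by
    rwa [le_div_iff₀ (mul_pos four_pos (log_pos (by linarith)))] at hl
  have hexponent : 3 * log n ≤ (n - 1 : ℝ) / (l + 1) := by
    rw [le_div_iff₀ (by positivity)]
    linarith
  rw [← exp_add_natCast_mul_log (by linarith), exp_le_one_iff]
  push_cast
  linarith

theorem natCast_mul_exp_neg_mul_cube_le (hn : 0 < n) (l : ℕ) :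
    n * (exp (-((n - 1 : ℝ) / (l + 1))) * (n : ℝ) ^ 3)
      ≤ exp (-(n : ℝ) / (l + 1) + 4 * log n + 1) := by
  have hinv : 1 / (l + 1 : ℝ) ≤ 1 := by
    rw [div_le_one (by positivity)]
    linarith [l.cast_nonneg (α := ℝ)]
  calc n * (exp (-((n - 1 : ℝ) / (l + 1))) * (n : ℝ) ^ 3)
      = exp (-((n - 1 : ℝ) / (l + 1))) * (n : ℝ) ^ 4 := by ring
    _ = exp (-(n : ℝ) / (l + 1) + 4 * log n + 1 / (l + 1)) := by
        rw [← exp_add_natCast_mul_log (by exact_mod_cast hn)]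
        congr 1
        push_cast
        ring
    _ ≤ exp (-(n : ℝ) / (l + 1) + 4 * log n + 1) := by gcongr

end ErrorBound

theorem stmt9_general {n l : ℕ} (hn : 64 ≤ n) (hl : (l : ℝ) ≤ n / (4 * log n)) :
    |a n l - leadingTerm n l|
      ≤ leadingTerm n l * exp (-(n : ℝ) / (l + 1) + 4 * log n + 1) := by
  have hn64 : (64 : ℝ) ≤ n := by exact_mod_cast hn
  have hlog : 1 ≤ log n := (le_log_iff_exp_le (by linarith)).2 (by linarith [exp_one_lt_three])
  have hln : (l : ℝ) ≤ n := hl.trans (div_le_self (by linarith) (by linarith))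
  have hT : 0 ≤ leadingTerm n l := leadingTerm_nonneg n l
  calc |a n l - leadingTerm n l|
      ≤ leadingTerm n l * (l * (exp (-((n - 1 : ℝ) / (l + 1))) * (n : ℝ) ^ 3)) :=
        abs_a_sub_leadingTerm_le (by omega) (by exact_mod_cast hln)
          (exp_neg_mul_cube_le_one hn hl)
    _ ≤ leadingTerm n l * (n * (exp (-((n - 1 : ℝ) / (l + 1))) * (n : ℝ) ^ 3)) := by gcongr
    _ ≤ leadingTerm n l * exp (-(n : ℝ) / (l + 1) + 4 * log n + 1) := by
        gcongr
        exact natCast_mul_exp_neg_mul_cube_le (by omega) l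

/-- **Theorem (explicit error bound).** There are effectively computable constants
`c > 0` and `N > 0` such that for all integers `n > N` and `0 ≤ l ≤ n/(10 log n)`,
`|a(n,l) − (l+1)^{l+n−1}/(l+1)!| ≤ ((l+1)^{l+n−1}/(l+1)!)·exp(−n/(l+1) + 6.5 log n + c)`. -/
theorem stmt9 :
    ∃ c : ℝ, 0 < c ∧ ∃ N : ℕ, 0 < N ∧ ∀ n l : ℕ, N < n →
      (l : ℝ) ≤ (n : ℝ) / (10 * Real.log n) →
      |a n l - (l + 1 : ℝ) ^ (l + n - 1) / (Nat.factorial (l + 1) : ℝ)| ≤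
        ((l + 1 : ℝ) ^ (l + n - 1) / (Nat.factorial (l + 1) : ℝ)) *
          Real.exp (-(n : ℝ) / ((l : ℝ) + 1) + 6.5 * Real.log n + c) := by
  refine ⟨1, one_pos, 64, by norm_num, fun n l hn hl => ?_⟩
  have hlog : 0 < log n := log_pos (by exact_mod_cast (by omega : 1 < n))
  refine (stmt9_general hn.le (hl.trans (by gcongr; norm_num))).trans ?_
  exact mul_le_mul_of_nonneg_left (by gcongr; norm_num) (leadingTerm_nonneg n l)
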